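/- arXiv:1801.03922 — 2 statements merged into one kernel-verified Lean document; each statement's English description precedes it below -/
import Mathlib

section
/- Let Λ be a finite metric space and let w assign a nonnegative real weight w(Q) to each subset Q ⊆ Λ, satisfying Σ_{Q∋x} w(Q)·|Q|²·exp(μ·diam(Q)) ≤ ζ for every x ∈ Λ, for some constants μ, ζ > 0. Then for arbitrary subsets P, S ⊆ Λ: Σ_{Q : P∼Q} w(Q)·|Q|²·exp(−μ·dist(Q,S)) ≤ ζ·Σ_{p∈P} exp(−μ·dist(p,S)). -/
/-!
A set `A` containing `p` satisfies `dist(p, S) ≤ diam A + dist(A, S)`, so the decay of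
`exp (-μ dist(A, S))` can be traded for that of `exp (-μ dist(p, S))` at the price of a factor
`exp (μ diam A)`. Bounding the sum over the sets that meet `P` by the sum, over `p ∈ P`, of the
sums over the sets through `p` leaves exactly the sums that the decay hypothesis controls.
-/

noncomputable section

open scoped BigOperators

namespace SetSums

variable {Λ : Type*} [Fintype Λ] [DecidableEq Λ] [MetricSpace Λ]

/-- Distance between two sets of sites: `dist(X,Y) = min_{x∈X, y∈Y} dist x y`. -/
def setDist (X Y : Set Λ) : ℝ := sInf (Set.image2 dist X Y)

theorem sum_biUnion_le_sum_sum {ι κ M : Type*} [DecidableEq ι] [AddCommMonoid M] [PartialOrder M]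
    [IsOrderedAddMonoid M] (s : Finset κ) (t : κ → Finset ι) {f : ι → M}
    (hf : ∀ k ∈ s, ∀ i ∈ t k, 0 ≤ f i) :
    ∑ i ∈ s.biUnion t, f i ≤ ∑ k ∈ s, ∑ i ∈ t k, f i := by
  have biUnion_eq_image : s.biUnion t = (s.sigma t).image Sigma.snd := by
    ext i
    simp
  rw [biUnion_eq_image, ← Finset.sum_sigma s t fun x => f x.2]
  refine Finset.sum_image_le_of_nonneg ?_
  simpa only [← biUnion_eq_image, Finset.mem_biUnion, forall_exists_index, and_imp] using
    fun i k hk hi => hf k hk i hi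

section

variable {X ι : Type*} [MetricSpace X] {p : X} {μ : ℝ}

theorem infDist_le_diam_add_setDist {A : Set X} (hA : Bornology.IsBounded A) (hp : p ∈ A)
    (S : Set X) :
    Metric.infDist p S ≤ Metric.diam A + setDist A S := by
  rcases S.eq_empty_or_nonempty with rfl | hS
  · -- both distances to the empty set take the default value `0`
    simp [setDist, Metric.diam_nonneg]
  rw [← sub_le_iff_le_add']
  refine le_csInf (Set.Nonempty.image2 ⟨p, hp⟩ hS) ?_
  rintro _ ⟨q, hq, s, hs, rfl⟩
  rw [sub_le_iff_le_add']
  calc Metric.infDist p S ≤ dist p s := Metric.infDist_le_dist_of_mem hs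
    _ ≤ dist p q + dist q s := dist_triangle p q s
    _ ≤ Metric.diam A + dist q s := by gcongr; exact Metric.dist_le_diam_of_mem hA hp hq

theorem exp_neg_mul_setDist_le {A : Set X} (hμ : 0 ≤ μ) (hA : Bornology.IsBounded A)
    (hp : p ∈ A) (S : Set X) :
    Real.exp (-μ * setDist A S) ≤
      Real.exp (μ * Metric.diam A) * Real.exp (-μ * Metric.infDist p S) := by
  rw [← Real.exp_add, Real.exp_le_exp]
  linarith [mul_le_mul_of_nonneg_left (infDist_le_diam_add_setDist hA hp S) hμ]

theorem sum_mul_exp_neg_mul_setDist_le {I : Finset ι} {A : ι → Set X} {c : ι → ℝ}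
    (hc : ∀ i ∈ I, 0 ≤ c i) (hμ : 0 ≤ μ) (hA : ∀ i ∈ I, Bornology.IsBounded (A i))
    (hp : ∀ i ∈ I, p ∈ A i) (S : Set X) :
    ∑ i ∈ I, c i * Real.exp (-μ * setDist (A i) S) ≤
      (∑ i ∈ I, c i * Real.exp (μ * Metric.diam (A i))) * Real.exp (-μ * Metric.infDist p S) := by
  rw [Finset.sum_mul]
  refine Finset.sum_le_sum fun i hi => ?_
  rw [mul_assoc]
  exact mul_le_mul_of_nonneg_left (exp_neg_mul_setDist_le hμ (hA i hi) (hp i hi) S) (hc i hi)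

open scoped Classical in
theorem right_sum_estimate_general {I : Finset ι} {A : ι → Set X} {c : ι → ℝ} {ζ : ℝ}
    {P : Finset X} (hc : ∀ i ∈ I, 0 ≤ c i) (hμ : 0 ≤ μ)
    (hA : ∀ i ∈ I, Bornology.IsBounded (A i))
    (hdecay : ∀ p ∈ P, ∑ i ∈ I with p ∈ A i, c i * Real.exp (μ * Metric.diam (A i)) ≤ ζ)
    (S : Set X) :
    ∑ i ∈ I with ((P : Set X) ∩ A i).Nonempty, c i * Real.exp (-μ * setDist (A i) S) ≤
      ζ * ∑ p ∈ P, Real.exp (-μ * Metric.infDist p S) := by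
  have meets_eq_biUnion : I.filter (fun i => ((P : Set X) ∩ A i).Nonempty) =
      P.biUnion fun p => I.filter (p ∈ A ·) := by
    ext i
    simp only [Set.Nonempty, Set.mem_inter_iff, Finset.mem_coe, Finset.mem_filter,
      Finset.mem_biUnion]
    tauto
  rw [meets_eq_biUnion, Finset.mul_sum]
  calc ∑ i ∈ P.biUnion fun p => I.filter (p ∈ A ·), c i * Real.exp (-μ * setDist (A i) S)
      ≤ ∑ p ∈ P, ∑ i ∈ I with p ∈ A i, c i * Real.exp (-μ * setDist (A i) S) :=
        sum_biUnion_le_sum_sum _ _ fun p _ i hi =>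
          mul_nonneg (hc i (Finset.mem_of_mem_filter i hi)) (Real.exp_nonneg _)
    _ ≤ ∑ p ∈ P, (∑ i ∈ I with p ∈ A i, c i * Real.exp (μ * Metric.diam (A i))) *
          Real.exp (-μ * Metric.infDist p S) :=
        Finset.sum_le_sum fun p _ => sum_mul_exp_neg_mul_setDist_le
          (fun i hi => hc i (Finset.mem_of_mem_filter i hi)) hμ
          (fun i hi => hA i (Finset.mem_of_mem_filter i hi))
          (fun i hi => (Finset.mem_filter.1 hi).2) S
    _ ≤ ∑ p ∈ P, ζ * Real.exp (-μ * Metric.infDist p S) := by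
        gcongr with p hp
        exact hdecay p hp

end

/-- **Right-sum estimate:** if `Σ_{Q∋x} w(Q)|Q|²e^{μ·diam Q} ≤ ζ` for all `x`, then
`Σ_{Q : P∼Q} w(Q)|Q|²e^{−μ·dist(Q,S)} ≤ ζ·Σ_{p∈P} e^{−μ·dist(p,S)}`. -/
theorem right_sum_estimate
    (w : Finset Λ → ℝ) (hw : ∀ Q, 0 ≤ w Q)
    (μ ζ : ℝ) (hμ : 0 < μ) (hζ : 0 < ζ)
    (hdecay : ∀ x : Λ, ∑ Q ∈ Finset.univ.filter (fun Q : Finset Λ => x ∈ Q),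
        w Q * (Q.card : ℝ) ^ 2 * Real.exp (μ * Metric.diam (Q : Set Λ)) ≤ ζ)
    (P S : Finset Λ) :
    ∑ Q ∈ Finset.univ.filter (fun Q : Finset Λ => (P ∩ Q).Nonempty),
        w Q * (Q.card : ℝ) ^ 2 * Real.exp (-μ * setDist (Q : Set Λ) (S : Set Λ)) ≤
      ζ * ∑ p ∈ P, Real.exp (-μ * Metric.infDist p (S : Set Λ)) := by
  simpa only [← Finset.coe_inter, Finset.coe_nonempty] using
    right_sum_estimate_general (I := .univ) (A := fun Q : Finset Λ => (Q : Set Λ)) (P := P)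
      (fun Q _ => mul_nonneg (hw Q) (sq_nonneg _)) hμ.le (fun Q _ => Q.finite_toSet.isBounded)
      (fun p _ => by simpa only [Finset.mem_coe] using hdecay p) S

end SetSums
end
end

section
/- Let Λ be a finite metric space and let w assign a nonnegative real weight w(Q) to each subset Q ⊆ Λ, satisfying Σ_{Q∋x} w(Q)·|Q|²·exp(μ·diam(Q)) ≤ ζ for every x ∈ Λ, for some constants μ, ζ > 0. Then for arbitrary subsets P, S ⊆ Λ: Σ_{Q,R : P∼Q, Q∼R, R∼S} w(Q)·w(R) ≤ ζ²·Σ_{p∈P} exp(−μ·dist(p,S)). -/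
/-!
If `q ∈ R` and `R ∼ S`, then `dist(q, S) ≤ diam R`, so `1 ≤ e^{μ diam R} e^{-μ dist(q, S)}`. With
the decay hypothesis at each `q ∈ Q`, a union bound over `q` gives the single sum estimate
`∑_{R : Q ∼ R ∼ S} w R ≤ ζ ∑_{q ∈ Q} e^{-μ dist(q, S)}`. If `p` also lies in `Q`, replacing each
`dist(q, S)` by `dist(p, S)` costs a factor `e^{μ diam Q}`, so the right side is at most
`ζ |Q| e^{μ diam Q} e^{-μ dist(p, S)}`. Multiply by `w Q` and take a union bound over `p ∈ P`: the
decay hypothesis at `p` absorbs the factor `|Q| e^{μ diam Q}`.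
-/

noncomputable section

open scoped BigOperators

namespace SetSums

variable {Λ : Type*} [Fintype Λ] [DecidableEq Λ] [MetricSpace Λ]

section UnionBound

variable {X : Type*} [DecidableEq X] {𝒬 : Finset (Finset X)}

lemma sum_inter_nonempty_le_sum_sum_mem {M : Type*} [AddCommMonoid M] [PartialOrder M]
    [IsOrderedAddMonoid M] (P : Finset X) {f : Finset X → M} (hf : ∀ Q ∈ 𝒬, 0 ≤ f Q) :
    ∑ Q ∈ 𝒬 with (P ∩ Q).Nonempty, f Q ≤ ∑ p ∈ P, ∑ Q ∈ 𝒬 with p ∈ Q, f Q := by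
  simp only [Finset.sum_filter]
  rw [Finset.sum_comm]
  refine Finset.sum_le_sum fun Q hQ => ?_
  have hterm : ∀ p ∈ P, 0 ≤ if p ∈ Q then f Q else 0 := fun _ _ => ite_nonneg (hf Q hQ) le_rfl
  split_ifs with hPQ
  · obtain ⟨p, hp⟩ := hPQ
    obtain ⟨hpP, hpQ⟩ := Finset.mem_inter.mp hp
    simpa only [if_pos hpQ] using Finset.single_le_sum hterm hpP
  · exact Finset.sum_nonneg hterm

variable {R : Type*} [Semiring R] [PartialOrder R] [IsOrderedRing R]

lemma sum_inter_nonempty_le_mul_sum {P : Finset X} {f u : Finset X → R} {g : X → R} {ζ : R}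
    (hf : ∀ Q ∈ 𝒬, 0 ≤ f Q) (hg : ∀ p ∈ P, 0 ≤ g p)
    (hfu : ∀ Q ∈ 𝒬, ∀ p ∈ P, p ∈ Q → f Q ≤ u Q * g p)
    (hu : ∀ p ∈ P, ∑ Q ∈ 𝒬 with p ∈ Q, u Q ≤ ζ) :
    ∑ Q ∈ 𝒬 with (P ∩ Q).Nonempty, f Q ≤ ζ * ∑ p ∈ P, g p :=
  calc ∑ Q ∈ 𝒬 with (P ∩ Q).Nonempty, f Q
      ≤ ∑ p ∈ P, ∑ Q ∈ 𝒬 with p ∈ Q, f Q := sum_inter_nonempty_le_sum_sum_mem P hf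
    _ ≤ ∑ p ∈ P, ∑ Q ∈ 𝒬 with p ∈ Q, u Q * g p :=
        Finset.sum_le_sum fun p hp => Finset.sum_le_sum fun Q hQ =>
          hfu Q (Finset.mem_filter.mp hQ).1 p hp (Finset.mem_filter.mp hQ).2
    _ = ∑ p ∈ P, (∑ Q ∈ 𝒬 with p ∈ Q, u Q) * g p := by simp only [Finset.sum_mul]
    _ ≤ ∑ p ∈ P, ζ * g p :=
        Finset.sum_le_sum fun p hp => mul_le_mul_of_nonneg_right (hu p hp) (hg p hp)
    _ = ζ * ∑ p ∈ P, g p := (Finset.mul_sum ..).symm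

lemma sum_mul_card_pow_mul_le {w c : Finset X → R} (hw : ∀ Q ∈ 𝒬, 0 ≤ w Q)
    (hc : ∀ Q ∈ 𝒬, 0 ≤ c Q) (x : X) {m n : ℕ} (hmn : m ≤ n) :
    ∑ Q ∈ 𝒬 with x ∈ Q, w Q * (Q.card : R) ^ m * c Q ≤
      ∑ Q ∈ 𝒬 with x ∈ Q, w Q * (Q.card : R) ^ n * c Q := by
  refine Finset.sum_le_sum fun Q hQ => ?_
  obtain ⟨hQ, hxQ⟩ := Finset.mem_filter.mp hQ
  have hcard : (1 : R) ≤ Q.card := by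
    simpa only [Nat.cast_one] using Nat.mono_cast (α := R) (Finset.card_pos.mpr ⟨x, hxQ⟩)
  have hwQ := hw Q hQ
  have hcQ := hc Q hQ
  gcongr

end UnionBound

section MiddleSums

variable {X : Type*} [PseudoMetricSpace X] {μ ζ : ℝ}

lemma exp_neg_mul_infDist_le {A : Set X} (hA : Bornology.IsBounded A) (hμ : 0 ≤ μ) {p q : X}
    (hp : p ∈ A) (hq : q ∈ A) (S : Set X) :
    Real.exp (-μ * Metric.infDist q S) ≤
      Real.exp (μ * Metric.diam A) * Real.exp (-μ * Metric.infDist p S) := by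
  have hdist : Metric.infDist p S ≤ Metric.infDist q S + Metric.diam A :=
    Metric.infDist_le_infDist_add_dist.trans
      (add_le_add_right (Metric.dist_le_diam_of_mem hA hp hq) _)
  rw [← Real.exp_add, Real.exp_le_exp]
  linarith [mul_le_mul_of_nonneg_left hdist hμ]

lemma sum_exp_neg_mul_infDist_le (hμ : 0 ≤ μ) {Q : Finset X} {p : X} (hp : p ∈ Q) (S : Set X) :
    ∑ q ∈ Q, Real.exp (-μ * Metric.infDist q S) ≤
      Q.card * (Real.exp (μ * Metric.diam (Q : Set X)) * Real.exp (-μ * Metric.infDist p S)) := by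
  rw [← nsmul_eq_mul]
  exact Finset.sum_le_card_nsmul _ _ _ fun q hq =>
    exp_neg_mul_infDist_le Q.finite_toSet.isBounded hμ hp hq S

variable [DecidableEq X] {𝒬 : Finset (Finset X)} {w : Finset X → ℝ}

theorem middle_sum_estimate (hw : ∀ Q ∈ 𝒬, 0 ≤ w Q) (hμ : 0 ≤ μ)
    (hdecay : ∀ x, ∑ Q ∈ 𝒬 with x ∈ Q, w Q * Real.exp (μ * Metric.diam (Q : Set X)) ≤ ζ)
    (P S : Finset X) :
    ∑ Q ∈ 𝒬 with (P ∩ Q).Nonempty ∧ (Q ∩ S).Nonempty, w Q ≤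
      ζ * ∑ p ∈ P, Real.exp (-μ * Metric.infDist p (S : Set X)) := by
  rw [← Finset.filter_filter, Finset.filter_comm]
  refine sum_inter_nonempty_le_mul_sum (fun Q hQ => hw Q (Finset.mem_filter.mp hQ).1)
    (fun p _ => (Real.exp_pos _).le) (fun Q hQ p _ hp => ?_) (fun p _ => ?_)
      (u := fun Q => w Q * Real.exp (μ * Metric.diam (Q : Set X)))
  · obtain ⟨hQ, s, hs⟩ := Finset.mem_filter.mp hQ
    obtain ⟨hsQ, hsS⟩ := Finset.mem_inter.mp hs
    have hexp := exp_neg_mul_infDist_le Q.finite_toSet.isBounded hμ hp hsQ (S : Set X)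
    rw [Metric.infDist_zero_of_mem (Finset.mem_coe.mpr hsS), mul_zero, Real.exp_zero] at hexp
    rw [mul_assoc]
    exact le_mul_of_one_le_right (hw Q hQ) hexp
  · refine (Finset.sum_le_sum_of_subset_of_nonneg
      (Finset.filter_subset_filter _ (Finset.filter_subset _ _)) fun Q hQ _ => ?_).trans (hdecay p)
    exact mul_nonneg (hw Q (Finset.mem_filter.mp hQ).1) (Real.exp_pos _).le

theorem double_middle_sum_estimate_general (hw : ∀ Q ∈ 𝒬, 0 ≤ w Q) (hμ : 0 ≤ μ)
    (hdecay : ∀ x, ∑ Q ∈ 𝒬 with x ∈ Q,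
      w Q * (Q.card : ℝ) * Real.exp (μ * Metric.diam (Q : Set X)) ≤ ζ)
    (P S : Finset X) :
    ∑ Q ∈ 𝒬 with (P ∩ Q).Nonempty,
      ∑ R ∈ 𝒬 with (Q ∩ R).Nonempty ∧ (R ∩ S).Nonempty, w Q * w R ≤
      ζ ^ 2 * ∑ p ∈ P, Real.exp (-μ * Metric.infDist p (S : Set X)) := by
  have hζ (x : X) : 0 ≤ ζ := (Finset.sum_nonneg fun Q hQ => mul_nonneg
    (mul_nonneg (hw Q (Finset.mem_filter.mp hQ).1) Q.card.cast_nonneg)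
    (Real.exp_pos _).le).trans (hdecay x)
  have hdecay_exp (x : X) :
      ∑ Q ∈ 𝒬 with x ∈ Q, w Q * Real.exp (μ * Metric.diam (Q : Set X)) ≤ ζ := by
    have hle := sum_mul_card_pow_mul_le hw
      (fun Q _ => (Real.exp_pos (μ * Metric.diam (Q : Set X))).le) x zero_le_one
    simp only [pow_zero, pow_one, mul_one] at hle
    exact hle.trans (hdecay x)
  rw [sq, mul_assoc, Finset.mul_sum (a := ζ)]
  refine sum_inter_nonempty_le_mul_sum
    (fun Q hQ => Finset.sum_nonneg fun R hR =>
      mul_nonneg (hw Q hQ) (hw R (Finset.mem_filter.mp hR).1))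
    (fun p _ => mul_nonneg (hζ p) (Real.exp_pos _).le) (fun Q hQ p _ hp => ?_)
    (fun p _ => hdecay p)
  calc ∑ R ∈ 𝒬 with (Q ∩ R).Nonempty ∧ (R ∩ S).Nonempty, w Q * w R
      = w Q * ∑ R ∈ 𝒬 with (Q ∩ R).Nonempty ∧ (R ∩ S).Nonempty, w R :=
        (Finset.mul_sum ..).symm
    _ ≤ w Q * (ζ * ∑ q ∈ Q, Real.exp (-μ * Metric.infDist q (S : Set X))) :=
        mul_le_mul_of_nonneg_left (middle_sum_estimate hw hμ hdecay_exp Q S) (hw Q hQ)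
    _ ≤ w Q * (ζ * (Q.card * (Real.exp (μ * Metric.diam (Q : Set X)) *
          Real.exp (-μ * Metric.infDist p (S : Set X))))) :=
        mul_le_mul_of_nonneg_left
          (mul_le_mul_of_nonneg_left (sum_exp_neg_mul_infDist_le hμ hp S) (hζ p)) (hw Q hQ)
    _ = w Q * Q.card * Real.exp (μ * Metric.diam (Q : Set X)) *
          (ζ * Real.exp (-μ * Metric.infDist p (S : Set X))) := by ring

end MiddleSums

/-- **Double middle-sum estimate:** if `Σ_{Q∋x} w(Q)|Q|²e^{μ·diam Q} ≤ ζ` for all `x`, then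
`Σ_{Q,R : P∼Q∼R∼S} w(Q)w(R) ≤ ζ²·Σ_{p∈P} e^{−μ·dist(p,S)}`. -/
theorem double_middle_sum_estimate
    (w : Finset Λ → ℝ) (hw : ∀ Q, 0 ≤ w Q)
    (μ ζ : ℝ) (hμ : 0 < μ) (hζ : 0 < ζ)
    (hdecay : ∀ x : Λ, ∑ Q ∈ Finset.univ.filter (fun Q : Finset Λ => x ∈ Q),
        w Q * (Q.card : ℝ) ^ 2 * Real.exp (μ * Metric.diam (Q : Set Λ)) ≤ ζ)
    (P S : Finset Λ) :
    ∑ Q ∈ Finset.univ.filter (fun Q : Finset Λ => (P ∩ Q).Nonempty),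
      ∑ R ∈ Finset.univ.filter
          (fun R : Finset Λ => (Q ∩ R).Nonempty ∧ (R ∩ S).Nonempty),
        w Q * w R ≤
      ζ ^ 2 * ∑ p ∈ P, Real.exp (-μ * Metric.infDist p (S : Set Λ)) := by
  exact double_middle_sum_estimate_general (fun Q _ => hw Q) hμ.le
    (fun x => by simpa only [pow_one] using (sum_mul_card_pow_mul_le (fun Q _ => hw Q)
      (fun _ _ => (Real.exp_pos _).le) x one_le_two).trans (hdecay x)) P S

end SetSums
end
end
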